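/- arXiv:2303.10631 — 2 statements merged into one kernel-verified Lean document; each statement's English description precedes it below -/
import Mathlib

section
/- Let p be a prime and k ∈ ℕ. Then every semantically trim bideterministic weighted automaton over the ring ℤ/p^kℤ is minimal: every weighted automaton over ℤ/p^kℤ with the same behaviour has at least as many states. -/
/-- A weighted automaton over a semiring `S` and alphabet `α`:
a finite type of states `Q`, a transition weighting `σ`, an initial
weighting `ι` and a terminal weighting `τ`. -/
structure WeightedAutomaton (S : Type) [Semiring S] (α : Type) : Type 1 where
  Q : Type
  [fintypeQ : Fintype Q]
  σ : Q → α → Q → S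
  ι : Q → S
  τ : Q → S

namespace WeightedAutomaton

attribute [instance] fintypeQ

variable {S : Type} [Semiring S] {α : Type}

/-- The "future" of a state on a word: the sum, over all runs from this state
upon the word, of the product of the transition weights times the terminal
weight of the last state.  (Sequences of states using a zero-weight transition
contribute zero, so this is exactly the sum over runs.) -/
def future (A : WeightedAutomaton S α) : List α → A.Q → S
  | [], q => A.τ q
  | c :: w, q => ∑ p : A.Q, A.σ q c p * A.future w p

/-- The behaviour of a weighted automaton: the series sending each word `w`
to the sum of the monomial weights `ι(q₀)·σ(q₀,c₁,q₁)⋯σ(q_{n−1},cₙ,qₙ)·τ(qₙ)`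
of all runs of the automaton upon `w`. -/
def behaviour (A : WeightedAutomaton S α) (w : List α) : S :=
  ∑ q : A.Q, A.ι q * A.future w q

/-- A weighted automaton is bideterministic if at most one state has nonzero
initial weight, at most one state has nonzero terminal weight, and for every
letter each state has at most one outgoing and at most one incoming transition
with nonzero weight upon that letter. -/
def Bideterministic (A : WeightedAutomaton S α) : Prop :=
  (∀ p q, A.ι p ≠ 0 → A.ι q ≠ 0 → p = q) ∧
  (∀ p q, A.τ p ≠ 0 → A.τ q ≠ 0 → p = q) ∧
  (∀ p c q q', A.σ p c q ≠ 0 → A.σ p c q' ≠ 0 → q = q') ∧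
  (∀ p p' c q, A.σ p c q ≠ 0 → A.σ p' c q ≠ 0 → p = p')

/-- `A.IsPath q l` : starting in state `q`, the list `l` of (letter, next state)
pairs follows transitions all of which have nonzero weight, i.e. it is a run. -/
def IsPath (A : WeightedAutomaton S α) : A.Q → List (α × A.Q) → Prop
  | _, [] => True
  | q, (c, q') :: l => A.σ q c q' ≠ 0 ∧ A.IsPath q' l

/-- The last state of a path. -/
def pathEnd (A : WeightedAutomaton S α) : A.Q → List (α × A.Q) → A.Q
  | q, [] => q
  | _, (_, q') :: l => A.pathEnd q' l

/-- The product of the transition weights along a path. -/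
def pathWeight (A : WeightedAutomaton S α) : A.Q → List (α × A.Q) → S
  | _, [] => 1
  | q, (c, q') :: l => A.σ q c q' * A.pathWeight q' l

/-- A state is accessible if some run from a state with nonzero initial weight
ends in it. -/
def Accessible (A : WeightedAutomaton S α) (q : A.Q) : Prop :=
  ∃ p l, A.ι p ≠ 0 ∧ A.IsPath p l ∧ A.pathEnd p l = q

/-- A state is coaccessible if some run from it ends in a state with nonzero
terminal weight. -/
def Coaccessible (A : WeightedAutomaton S α) (q : A.Q) : Prop :=
  ∃ l, A.IsPath q l ∧ A.τ (A.pathEnd q l) ≠ 0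

/-- A weighted automaton is trim if all its states are accessible and
coaccessible. -/
def Trim (A : WeightedAutomaton S α) : Prop :=
  ∀ q, A.Accessible q ∧ A.Coaccessible q

/-- A weighted automaton is semantically trim if every state lies on some run
whose monomial weight is nonzero. -/
def SemanticallyTrim (A : WeightedAutomaton S α) : Prop :=
  ∀ q, ∃ p l, A.IsPath p l ∧ (q = p ∨ q ∈ l.map Prod.snd) ∧
    A.ι p * A.pathWeight p l * A.τ (A.pathEnd p l) ≠ 0

/-- The number of states of a weighted automaton. -/
def states (A : WeightedAutomaton S α) : ℕ := Fintype.card A.Q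

/-- A weighted automaton is minimal if every weighted automaton over the same
semiring and alphabet with the same behaviour has at least as many states. -/
def Minimal (A : WeightedAutomaton S α) : Prop :=
  ∀ B : WeightedAutomaton S α, B.behaviour = A.behaviour → A.states ≤ B.states

end WeightedAutomaton

namespace WeightedAutomaton

variable {S : Type} [CommRing S] {α : Type}

/-- Row vector `x` pushed through the word. -/
def pastFrom (A : WeightedAutomaton S α) : (A.Q → S) → List α → A.Q → S
  | x, [] => x
  | x, c :: w => A.pastFrom (fun q => ∑ p : A.Q, x p * A.σ p c q) w

theorem sum_future_append (A : WeightedAutomaton S α) (u v : List α) (x : A.Q → S) :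
    ∑ q, x q * A.future (u ++ v) q = ∑ q, A.pastFrom x u q * A.future v q := by
  induction u generalizing x with
  | nil => simp [pastFrom]
  | cons c u ih =>
    simp only [List.cons_append, pastFrom, future]
    rw [← ih]
    simp only [Finset.mul_sum, Finset.sum_mul]
    rw [Finset.sum_comm]
    simp only [mul_assoc]

theorem pastFrom_path (A : WeightedAutomaton S α) (hb : A.Bideterministic)
    (l : List (α × A.Q)) (p : A.Q) (x : A.Q → S) (hx : ∀ q, q ≠ p → x q = 0)
    (hl : A.IsPath p l) :
    A.pastFrom x (l.map Prod.fst) (A.pathEnd p l) = x p * A.pathWeight p l ∧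
    ∀ q, q ≠ A.pathEnd p l → A.pastFrom x (l.map Prod.fst) q = 0 := by
  induction l generalizing p x with
  | nil => simpa [pastFrom, pathEnd, pathWeight] using hx
  | cons a l ih =>
    obtain ⟨c, p'⟩ := a
    obtain ⟨h1, h2⟩ := hl
    have hs : ∀ q, ∑ r, x r * A.σ r c q = x p * A.σ p c q := fun q =>
      Finset.sum_eq_single p (fun r _ hr => by rw [hx r hr, zero_mul]) (by simp)
    have := ih p' (fun q => ∑ r, x r * A.σ r c q) (by
      intro q hq
      change ∑ r, x r * A.σ r c q = 0
      rw [hs]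
      by_cases h : A.σ p c q = 0
      · rw [h, mul_zero]
      · exact absurd (hb.2.2.1 _ _ _ _ h h1) hq) h2
    simp only [List.map_cons, pastFrom, pathEnd, pathWeight]
    refine ⟨?_, this.2⟩
    rw [this.1, hs, mul_assoc]

theorem future_path (A : WeightedAutomaton S α) (hb : A.Bideterministic)
    (l : List (α × A.Q)) (r : A.Q) (hl : A.IsPath r l) (ht : A.τ (A.pathEnd r l) ≠ 0) :
    A.future (l.map Prod.fst) r = A.pathWeight r l * A.τ (A.pathEnd r l) ∧
    ∀ q, q ≠ r → A.future (l.map Prod.fst) q = 0 := by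
  induction l generalizing r with
  | nil =>
    refine ⟨by simp [future, pathEnd, pathWeight], fun q hq => ?_⟩
    by_contra h
    exact hq (hb.2.1 _ _ h ht)
  | cons a l ih =>
    obtain ⟨c, r'⟩ := a
    obtain ⟨h1, h2⟩ := hl
    have := ih r' h2 ht
    have hs : ∀ q, A.future (c :: l.map Prod.fst) q
        = A.σ q c r' * A.future (l.map Prod.fst) r' := fun q =>
      Finset.sum_eq_single r' (fun r _ hr => by rw [this.2 r hr, mul_zero]) (by simp)
    simp only [List.map_cons, pathEnd, pathWeight]
    refine ⟨by rw [hs, this.1, mul_assoc], fun q hq => ?_⟩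
    rw [hs]
    by_cases h : A.σ q c r' = 0
    · rw [h, zero_mul]
    · exact absurd (hb.2.2.2 _ _ _ _ h h1) hq

theorem split_path (A : WeightedAutomaton S α) (q : A.Q) (l : List (α × A.Q)) (p : A.Q)
    (hl : A.IsPath p l) (hq : q = p ∨ q ∈ l.map Prod.snd) :
    ∃ l1 l2, A.IsPath p l1 ∧ A.pathEnd p l1 = q ∧ A.IsPath q l2 ∧
      A.pathEnd q l2 = A.pathEnd p l ∧
      A.pathWeight p l = A.pathWeight p l1 * A.pathWeight q l2 := by
  induction l generalizing p with
  | nil =>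
    have : q = p := by simpa using hq
    subst this
    exact ⟨[], [], trivial, rfl, trivial, rfl, by simp [pathWeight]⟩
  | cons a l ih =>
    by_cases h : q = p
    · subst h
      exact ⟨[], a :: l, trivial, rfl, hl, rfl, by simp [pathWeight]⟩
    · obtain ⟨c, p'⟩ := a
      obtain ⟨l1, l2, a1, a2, a3, a4, a5⟩ := ih p' hl.2 (by simpa [h] using hq)
      exact ⟨(c, p') :: l1, l2, ⟨hl.1, a1⟩, a2, a3, a4, by
        simp only [pathWeight]; rw [a5, mul_assoc]⟩

theorem hankel_diag (A : WeightedAutomaton S α) (ht : A.SemanticallyTrim)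
    (hb : A.Bideterministic) :
    ∃ (u v : A.Q → List α), (∀ q, A.behaviour (u q ++ v q) ≠ 0) ∧
      ∀ q r, q ≠ r → A.behaviour (u q ++ v r) = 0 := by
  have key : ∀ q, ∃ u v : List α, A.pastFrom A.ι u q * A.future v q ≠ 0 ∧
      (∀ r, r ≠ q → A.pastFrom A.ι u r = 0) ∧ (∀ r, r ≠ q → A.future v r = 0) := by
    intro q
    obtain ⟨p, l, hl, hq, hne⟩ := ht q
    obtain ⟨l1, l2, a1, a2, a3, a4, a5⟩ := A.split_path q l p hl hq
    have hi : A.ι p ≠ 0 := fun h => hne (by rw [h, zero_mul, zero_mul])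
    have hτ : A.τ (A.pathEnd q l2) ≠ 0 := fun h => hne (by rw [← a4, h, mul_zero])
    have b1 := A.pastFrom_path hb l1 p A.ι (fun r hr => by
      by_contra h
      exact hr (hb.1 _ _ h hi)) a1
    have b2 := A.future_path hb l2 q a3 hτ
    rw [a2] at b1
    refine ⟨_, _, ?_, b1.2, b2.2⟩
    rw [b1.1, b2.1, a4]
    intro h
    apply hne
    rw [a5, ← h]
    ring
  choose u v h1 h2 h3 using key
  have hs : ∀ q r, A.behaviour (u q ++ v r) = A.pastFrom A.ι (u q) q * A.future (v r) q := by
    intro q r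
    unfold behaviour
    rw [sum_future_append]
    exact Finset.sum_eq_single q (fun s _ hs => by rw [h2 q s hs, zero_mul]) (by simp)
  refine ⟨u, v, fun q => by rw [hs]; exact h1 q, fun q r hqr => ?_⟩
  rw [hs, h3 r q hqr, mul_zero]

end WeightedAutomaton

theorem zmod_exists_mul_eq (p k : ℕ) (hp : p.Prime) (z : ℤ) (hz : ¬ ((p : ℤ) ^ (k + 1) ∣ z)) :
    ∃ c d : ℤ, c * z = (p : ℤ) ^ k + (p : ℤ) ^ (k + 1) * d := by
  have hg : (Int.gcd z ((p : ℤ) ^ (k + 1))) ∣ p ^ (k + 1) := by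
    have := Int.gcd_dvd_right z ((p : ℤ) ^ (k + 1))
    exact_mod_cast this
  obtain ⟨e, he, hge⟩ := (Nat.dvd_prime_pow hp).1 hg
  have hek : e ≤ k := by
    by_contra h
    have : e = k + 1 := by omega
    subst this
    apply hz
    have := Int.gcd_dvd_left z ((p : ℤ) ^ (k + 1))
    rw [hge] at this
    exact_mod_cast this
  have hbz := Int.gcd_eq_gcd_ab z ((p : ℤ) ^ (k + 1))
  rw [hge] at hbz
  obtain ⟨f, rfl⟩ := Nat.exists_eq_add_of_le hek
  refine ⟨(p : ℤ) ^ f * Int.gcdA z ((p : ℤ) ^ (e + f + 1)),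
    - ((p : ℤ) ^ f * Int.gcdB z ((p : ℤ) ^ (e + f + 1))), ?_⟩
  push_cast at hbz
  rw [pow_add (p : ℤ) e f]
  linear_combination (-(p : ℤ) ^ f) * hbz

theorem diag_factor {n m : Type} [Fintype n] [Fintype m] (p k : ℕ) (hp : p.Prime)
    (X : n → m → ZMod (p ^ k)) (Y : m → n → ZMod (p ^ k))
    (h1 : ∀ i, ∑ s, X i s * Y s i ≠ 0) (h2 : ∀ i j, i ≠ j → ∑ s, X i s * Y s j = 0) :
    Fintype.card n ≤ Fintype.card m := by
  classical
  rcases isEmpty_or_nonempty n with hn | ⟨⟨i0⟩⟩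
  · simp
  obtain _ | k := k
  · exact absurd (Subsingleton.elim (α := ZMod 1) _ _) (h1 i0)
  choose X' hX using fun i s => ZMod.intCast_surjective (X i s)
  choose Y' hY using fun i s => ZMod.intCast_surjective (Y i s)
  have hc : ∀ i j, ((∑ s, X' i s * Y' s j : ℤ) : ZMod (p ^ (k + 1))) = ∑ s, X i s * Y s j := by
    intro i j
    push_cast
    simp [hX, hY]
  have hdvd : ∀ z : ℤ, (z : ZMod (p ^ (k + 1))) = 0 ↔ (p : ℤ) ^ (k + 1) ∣ z := by
    intro z
    rw [ZMod.intCast_zmod_eq_zero_iff_dvd]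
    push_cast
    rfl
  choose c d hcd using fun i => zmod_exists_mul_eq p k hp (∑ s, X' i s * Y' s i)
    (fun h => h1 i (by rw [← hc, hdvd]; exact h))
  have hoff : ∀ i j, ∃ e : ℤ, i ≠ j → ∑ s, X' i s * Y' s j = (p : ℤ) ^ (k + 1) * e := by
    intro i j
    by_cases hij : i = j
    · exact ⟨0, fun h => absurd hij h⟩
    · have := (hdvd _).1 ((hc i j).trans (h2 i j hij))
      obtain ⟨e, he⟩ := this
      exact ⟨e, fun _ => he⟩
  choose e he using hoff
  let M : Matrix n m ℤ := Matrix.of fun i s => c i * X' i s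
  let N : Matrix m n ℤ := Matrix.of fun s j => Y' s j
  let Z : Matrix n n ℤ := Matrix.of fun i j => if i = j then d i else c i * e i j
  have hMN : M * N = ((p : ℤ) ^ k) • (1 + (p : ℤ) • Z) := by
    ext i j
    have : (M * N) i j = c i * ∑ s, X' i s * Y' s j := by
      simp [Matrix.mul_apply, M, N, Finset.mul_sum, mul_assoc]
    rw [this]
    by_cases hij : i = j
    · subst hij
      rw [hcd]
      simp [Z]
      ring
    · rw [he i j hij]
      simp [Z, hij]
      ring
  have hdet : (M * N).det ≠ 0 := by
    rw [hMN, Matrix.det_smul]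
    have hp0 : (p : ℤ) ≠ 0 := by exact_mod_cast hp.ne_zero
    refine mul_ne_zero (pow_ne_zero _ (pow_ne_zero _ hp0)) ?_
    intro h
    have : Fact p.Prime := ⟨hp⟩
    have h' := congrArg (Int.castRingHom (ZMod p)) h
    rw [RingHom.map_det, map_zero] at h'
    have : (Int.castRingHom (ZMod p)).mapMatrix (1 + (p : ℤ) • Z) = 1 := by
      ext i j
      have hz : (1 + (p : ℤ) • Z) i j = (if i = j then 1 else 0) + (p : ℤ) * Z i j := by
        rw [Matrix.add_apply, Matrix.smul_apply, Matrix.one_apply, smul_eq_mul]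
      rw [RingHom.mapMatrix_apply, Matrix.map_apply, hz, Matrix.one_apply]
      simp
    rw [this, Matrix.det_one] at h'
    exact one_ne_zero h'
  by_contra hlt
  push Not at hlt
  have hinj : Function.Injective (Matrix.mulVecLin N) := by
    rw [← LinearMap.ker_eq_bot, LinearMap.ker_eq_bot']
    intro w hw
    by_contra hw0
    refine hdet (Matrix.exists_mulVec_eq_zero_iff.1 ⟨w, hw0, ?_⟩)
    rw [Matrix.mulVecLin_apply] at hw
    rw [← Matrix.mulVec_mulVec, hw, Matrix.mulVec_zero]
  exact absurd (card_le_of_injective ℤ _ hinj) (not_le.2 hlt)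

/-- Every semantically trim bideterministic weighted automaton over `ZMod p^k`
(`p` prime, `k ∈ ℕ`) is minimal. -/
theorem semanticallyTrim_bideterministic_minimal_zmod_prime_pow
    (p k : ℕ) (hp : p.Prime) {α : Type} [Fintype α] [Nonempty α]
    (A : WeightedAutomaton (ZMod (p ^ k)) α)
    (htrim : A.SemanticallyTrim) (hbidet : A.Bideterministic) :
    A.Minimal := by
  intro B hB
  obtain ⟨u, v, h1, h2⟩ := A.hankel_diag htrim hbidet
  have hs : ∀ q r, ∑ s, B.pastFrom B.ι (u q) s * B.future (v r) s = A.behaviour (u q ++ v r) := by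
    intro q r
    rw [← hB]
    exact (B.sum_future_append (u q) (v r) B.ι).symm
  exact diag_factor p k hp (fun q s => B.pastFrom B.ι (u q) s) (fun s r => B.future (v r) s)
    (fun q => by rw [hs]; exact h1 q) (fun q r hqr => by rw [hs]; exact h2 q r hqr)
end

section
/- Let p be a prime and k ∈ ℕ. Then every bideterministic weighted automaton A over the ring ℤ/p^kℤ admits an equivalent minimal automaton that is bideterministic: there exists a bideterministic weighted automaton B over ℤ/p^kℤ with ‖B‖ = ‖A‖ such that B is minimal. -/
namespace WeightedAutomaton

section aux

variable {S : Type} [CommRing S] {α : Type}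

/-- Forward propagation of a weight vector along a word. -/
def fwd (A : WeightedAutomaton S α) : (A.Q → S) → List α → A.Q → S
  | x, [] => x
  | x, c :: w => A.fwd (fun q => ∑ p : A.Q, x p * A.σ p c q) w

theorem fwd_future (A : WeightedAutomaton S α) (u v : List α) (x : A.Q → S) :
    ∑ q, x q * A.future (u ++ v) q = ∑ q, A.fwd x u q * A.future v q := by
  induction u generalizing x with
  | nil => rfl
  | cons c u ih =>
    rw [fwd, ← ih]
    simp only [List.cons_append, future, Finset.mul_sum, Finset.sum_mul]
    rw [Finset.sum_comm]
    simp only [mul_assoc]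

theorem fwd_append_singleton (A : WeightedAutomaton S α) (u : List α) (c : α) (x : A.Q → S)
    (q : A.Q) : A.fwd x (u ++ [c]) q = ∑ p, A.fwd x u p * A.σ p c q := by
  induction u generalizing x with
  | nil => rfl
  | cons d u ih => exact ih _

theorem fwd_unique (A : WeightedAutomaton S α) (hA : A.Bideterministic) (u : List α)
    (x : A.Q → S) (hx : ∀ p q, x p ≠ 0 → x q ≠ 0 → p = q) (p q : A.Q)
    (h1 : A.fwd x u p ≠ 0) (h2 : A.fwd x u q ≠ 0) : p = q := by
  induction u generalizing x with
  | nil => exact hx p q h1 h2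
  | cons c u ih =>
    refine ih _ ?_ h1 h2
    intro a b ha hb
    obtain ⟨r, -, hr⟩ := Finset.exists_ne_zero_of_sum_ne_zero ha
    obtain ⟨s, -, hs⟩ := Finset.exists_ne_zero_of_sum_ne_zero hb
    have := hx r s (left_ne_zero_of_mul hr) (left_ne_zero_of_mul hs)
    subst this
    exact hA.2.2.1 r c a b (right_ne_zero_of_mul hr) (right_ne_zero_of_mul hs)

theorem future_unique (A : WeightedAutomaton S α) (hA : A.Bideterministic) (v : List α)
    (p q : A.Q) (h1 : A.future v p ≠ 0) (h2 : A.future v q ≠ 0) : p = q := by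
  induction v generalizing p q with
  | nil => exact hA.2.1 p q h1 h2
  | cons c v ih =>
    obtain ⟨r, -, hr⟩ := Finset.exists_ne_zero_of_sum_ne_zero h1
    obtain ⟨s, -, hs⟩ := Finset.exists_ne_zero_of_sum_ne_zero h2
    have := ih r s (right_ne_zero_of_mul hr) (right_ne_zero_of_mul hs)
    subst this
    exact hA.2.2.2 p q c r (left_ne_zero_of_mul hr) (left_ne_zero_of_mul hs)

theorem future_cons_of_ne (A : WeightedAutomaton S α) (hA : A.Bideterministic) (v : List α)
    (c : α) (p q : A.Q) (h : A.σ p c q ≠ 0) :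
    A.future (c :: v) p = A.σ p c q * A.future v q := by
  rw [future]
  refine Finset.sum_eq_single q (fun r _ hr => ?_) (fun h => absurd (Finset.mem_univ _) h)
  by_contra h'
  exact hr (hA.2.2.1 p c r q (left_ne_zero_of_mul h') h)

/-- A state lying on a successful run of nonzero weight. -/
def Good (A : WeightedAutomaton S α) (q : A.Q) : Prop :=
  ∃ u v, A.fwd A.ι u q * A.future v q ≠ 0

open Classical in
/-- Restriction to good states. -/
noncomputable def restr (A : WeightedAutomaton S α) : WeightedAutomaton S α where
  Q := {q : A.Q // A.Good q}
  σ p c q := A.σ p.1 c q.1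
  ι p := A.ι p.1
  τ p := A.τ p.1

theorem restr_bidet (A : WeightedAutomaton S α) (hA : A.Bideterministic) :
    A.restr.Bideterministic :=
  ⟨fun p q h1 h2 => Subtype.ext (hA.1 p.1 q.1 h1 h2),
   fun p q h1 h2 => Subtype.ext (hA.2.1 p.1 q.1 h1 h2),
   fun p c q q' h1 h2 => Subtype.ext (hA.2.2.1 p.1 c q.1 q'.1 h1 h2),
   fun p p' c q h1 h2 => Subtype.ext (hA.2.2.2 p.1 p'.1 c q.1 h1 h2)⟩

theorem restr_future (A : WeightedAutomaton S α) (hA : A.Bideterministic) (v : List α)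
    (q : A.restr.Q) : A.restr.future v q = 0 ∨ A.restr.future v q = A.future v q.1 := by
  induction v generalizing q with
  | nil => exact Or.inr rfl
  | cons c v ih =>
    by_cases h : ∃ r, A.restr.σ q c r ≠ 0
    · obtain ⟨r, hr⟩ := h
      rw [future_cons_of_ne _ (A.restr_bidet hA) v c q r hr,
        future_cons_of_ne A hA v c q.1 r.1 hr]
      rcases ih r with h | h
      · left; rw [h, mul_zero]
      · right; rw [h]; rfl
    · push Not at h
      left
      rw [future]
      exact Finset.sum_eq_zero fun r _ => by rw [h r, zero_mul]

theorem sum_restr (A : WeightedAutomaton S α) (f : A.Q → S) (h : ∀ q, ¬ A.Good q → f q = 0) :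
    ∑ q, f q = ∑ q : A.restr.Q, f q.1 := by
  classical
  symm
  change ∑ q ∈ (Finset.univ : Finset A.restr.Q), f q.1 = _
  refine Finset.sum_of_injOn (fun q : A.restr.Q => q.1) ?_ ?_ ?_ ?_
  · intro a _ b _ hab; exact Subtype.ext hab
  · intro a _; simp
  · intro q _ hq
    apply h
    intro hg
    exact hq ⟨⟨q, hg⟩, Finset.mem_coe.mpr (Finset.mem_univ _), rfl⟩
  · intros; rfl

theorem restr_main (A : WeightedAutomaton S α) (hA : A.Bideterministic) (v u : List α) :
    ∑ q, A.fwd A.ι u q * A.future v q =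
      ∑ q : A.restr.Q, A.fwd A.ι u q.1 * A.restr.future v q := by
  induction v generalizing u with
  | nil =>
    refine sum_restr A (fun q => A.fwd A.ι u q * A.future [] q) fun q hq => ?_
    by_contra h
    exact hq ⟨u, [], h⟩
  | cons c v ih =>
    rw [← fwd_future, show u ++ c :: v = (u ++ [c]) ++ v by simp, fwd_future, ih]
    simp only [fwd_append_singleton, future, Finset.mul_sum]
    rw [Finset.sum_comm]
    refine Finset.sum_congr rfl fun r _ => ?_
    rw [Finset.sum_mul, sum_restr A (fun p => A.fwd A.ι u p * A.σ p c r.1 * A.restr.future v r)]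
    · exact Finset.sum_congr rfl fun p _ => mul_assoc _ _ _
    · intro q hq
      by_contra h
      have hσ : A.σ q c r.1 ≠ 0 := right_ne_zero_of_mul (left_ne_zero_of_mul h)
      rcases restr_future A hA v r with h0 | h0
      · exact h (by rw [h0, mul_zero])
      · refine hq ⟨u, c :: v, ?_⟩
        rw [future_cons_of_ne A hA v c q r.1 hσ, ← mul_assoc, ← h0]
        exact h

theorem restr_behaviour (A : WeightedAutomaton S α) (hA : A.Bideterministic) :
    A.restr.behaviour = A.behaviour := by
  funext w
  exact (restr_main A hA w []).symm

end aux

end WeightedAutomaton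

theorem exists_primitive_kernel {m n : Type} [Fintype m] [Fintype n]
    (h : Fintype.card m < Fintype.card n) (Y : Matrix m n ℤ) :
    ∃ v : n → ℤ, Y.mulVec v = 0 ∧ Finset.univ.gcd v = 1 := by
  classical
  obtain ⟨t, ht0, ht⟩ : ∃ t : n → ℤ, t ≠ 0 ∧ Y.mulVec t = 0 := by
    by_contra! hc
    refine absurd (card_le_of_injective ℤ Y.mulVecLin ?_) (not_le.mpr h)
    rw [injective_iff_map_eq_zero]
    intro t ht
    by_contra h0
    exact hc t h0 ht
  obtain ⟨i, hi⟩ := Function.ne_iff.mp ht0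
  obtain ⟨g, hg, hg1⟩ := Finset.extract_gcd t (s := Finset.univ) ⟨i, Finset.mem_univ i⟩
  refine ⟨g, ?_, hg1⟩
  have hd : Finset.univ.gcd t ≠ 0 := by
    intro h0
    exact hi (Finset.gcd_eq_zero_iff.mp h0 i (Finset.mem_univ i))
  have : t = Finset.univ.gcd t • g := by
    funext j
    exact hg j (Finset.mem_univ j)
  rw [this, Matrix.mulVec_smul] at ht
  exact (smul_eq_zero.mp ht).resolve_left hd

theorem card_le_of_diag (p k : ℕ) (hp : p.Prime) {m n : Type} [Fintype m] [Fintype n]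
    (X : n → m → ZMod (p ^ k)) (Y : m → n → ZMod (p ^ k))
    (hd : ∀ i, ∑ r, X i r * Y r i ≠ 0) (ho : ∀ i j, i ≠ j → ∑ r, X i r * Y r j = 0) :
    Fintype.card n ≤ Fintype.card m := by
  classical
  by_contra! hlt
  have hs : ∀ r j, ∃ z : ℤ, (z : ZMod (p ^ k)) = Y r j := fun r j => ZMod.intCast_surjective _
  choose Z hZ using hs
  obtain ⟨v, hv, hg⟩ := exists_primitive_kernel hlt (Matrix.of Z)
  have hv' : ∀ r, ∑ j, Y r j * (v j : ZMod (p ^ k)) = 0 := by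
    intro r
    have := congrArg (Int.cast : ℤ → ZMod (p ^ k)) (congrFun hv r)
    simpa [Matrix.mulVec, dotProduct, hZ] using this
  have hdvd : ∀ i, (p : ℤ) ∣ v i := by
    intro i
    by_contra hnd
    have hu : IsUnit (v i : ZMod (p ^ k)) := by
      have hc : IsCoprime (v i) ((p ^ k : ℕ) : ℤ) := by
        push_cast
        exact (((Nat.prime_iff_prime_int.mp hp).coprime_iff_not_dvd.mpr hnd).symm).pow_right
      obtain ⟨a, b, hab⟩ := hc
      have := congrArg (Int.cast : ℤ → ZMod (p ^ k)) hab
      rw [Int.cast_add, Int.cast_mul, Int.cast_mul, Int.cast_natCast, ZMod.natCast_self,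
        mul_zero, add_zero, Int.cast_one] at this
      exact IsUnit.of_mul_eq_one_right _ this
    have h1 : (∑ r, X i r * Y r i) * (v i : ZMod (p ^ k)) = 0 := by
      have h2 : ∑ j, (∑ r, X i r * Y r j) * (v j : ZMod (p ^ k)) = 0 := by
        simp only [Finset.sum_mul]
        rw [Finset.sum_comm]
        refine Finset.sum_eq_zero fun r _ => ?_
        simp only [mul_assoc]
        rw [← Finset.mul_sum, hv', mul_zero]
      rw [← h2]
      symm
      refine Finset.sum_eq_single i (fun j _ hj => ?_) (fun h => absurd (Finset.mem_univ _) h)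
      rw [ho i j hj.symm, zero_mul]
    exact hd i (hu.mul_left_eq_zero.mp h1)
  have : (p : ℤ) ∣ 1 := hg ▸ Finset.dvd_gcd fun i _ => hdvd i
  exact (Nat.prime_iff_prime_int.mp hp).not_isUnit (isUnit_of_dvd_one this)

/-- Every bideterministic weighted automaton over `ZMod p^k` (`p` prime,
`k ∈ ℕ`) admits an equivalent minimal automaton that is bideterministic. -/
theorem exists_minimal_bideterministic_equivalent_zmod_prime_pow
    (p k : ℕ) (hp : p.Prime) {α : Type} [Fintype α] [Nonempty α]
    (A : WeightedAutomaton (ZMod (p ^ k)) α) (hA : A.Bideterministic) :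
    ∃ B : WeightedAutomaton (ZMod (p ^ k)) α,
      B.behaviour = A.behaviour ∧ B.Bideterministic ∧ B.Minimal := by
  refine ⟨A.restr, A.restr_behaviour hA, A.restr_bidet hA, fun C hC => ?_⟩
  rw [A.restr_behaviour hA] at hC
  choose u v huv using fun q : A.restr.Q => q.2
  have key : ∀ i j : A.restr.Q, ∑ r, C.fwd C.ι (u i) r * C.future (v j) r =
      ∑ r, A.fwd A.ι (u i) r * A.future (v j) r := by
    intro i j
    rw [← WeightedAutomaton.fwd_future, ← WeightedAutomaton.fwd_future]
    exact congrFun hC (u i ++ v j)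
  refine card_le_of_diag p k hp (fun i r => C.fwd C.ι (u i) r)
    (fun r j => C.future (v j) r) ?_ ?_
  · intro i
    rw [key, Finset.sum_eq_single i.1]
    · exact huv i
    · intro r _ hr
      by_contra h
      exact hr (A.fwd_unique hA (u i) A.ι hA.1 r i.1 (left_ne_zero_of_mul h)
        (left_ne_zero_of_mul (huv i)))
    · exact fun h => absurd (Finset.mem_univ _) h
  · intro i j hij
    rw [key]
    refine Finset.sum_eq_zero fun r _ => ?_
    by_contra h
    have h1 := A.fwd_unique hA (u i) A.ι hA.1 r i.1 (left_ne_zero_of_mul h)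
        (left_ne_zero_of_mul (huv i))
    have h2 := A.future_unique hA (v j) r j.1 (right_ne_zero_of_mul h)
        (right_ne_zero_of_mul (huv j))
    exact hij (Subtype.ext (h1.symm.trans h2))
end
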